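/- Suppose Φ : 𝔻ⁿ → 𝔻ⁿ is holomorphic and C¹-smooth on the closed polydisc, and satisfies the rank condition (†): for every nonempty subset I ⊆ {1,…,n} of cardinality q and every ζ ∈ 𝕋ⁿ with Φ_I(ζ) ∈ 𝕋^q, the complex derivative d_ζΦ_I has rank q. Then the same holds on the full topological boundary: for every nonempty I ⊆ {1,…,n} of cardinality q and every ξ in the closure of 𝔻ⁿ with Φ_I(ξ) ∈ 𝕋^q, the derivative d_ξΦ_I has rank q. -/

import Mathlib

open MeasureTheory Metric Set ENNReal

noncomputable section

/-- The open unit polydisc in `ℂⁿ`. -/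
def polydisc (n : ℕ) : Set (Fin n → ℂ) := {z | ∀ j, ‖z j‖ < 1}

/-- The closed unit polydisc in `ℂⁿ`. -/
def closedPolydisc (n : ℕ) : Set (Fin n → ℂ) := {z | ∀ j, ‖z j‖ ≤ 1}

/-- The distinguished boundary (torus) of the polydisc. -/
def torus (n : ℕ) : Set (Fin n → ℂ) := {z | ∀ j, ‖z j‖ = 1}

/-- The `(i,j)` entry `∂Φ_i/∂z_j(ζ)` of the complex Jacobian matrix of `Φ` at `ζ`
(computed via the derivative of the extension to the closed polydisc). -/
def jacEntry (n : ℕ) (Φ : (Fin n → ℂ) → (Fin n → ℂ)) (ζ : Fin n → ℂ) (i j : Fin n) : ℂ :=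
  fderivWithin ℝ Φ (closedPolydisc n) ζ (Pi.single j 1) i

/-- The rank condition (†): for every nonempty `I ⊆ {1,…,n}` of cardinality `q` and
every `ζ ∈ 𝕋ⁿ` with `Φ_I(ζ) ∈ 𝕋^q`, the Jacobian `d_ζΦ_I` has rank `q`. -/
def rankCond (n : ℕ) (Φ : (Fin n → ℂ) → (Fin n → ℂ)) : Prop :=
  ∀ I : Finset (Fin n), I.Nonempty → ∀ ζ ∈ torus n, (∀ i ∈ I, ‖Φ ζ i‖ = 1) →
    Matrix.rank (Matrix.of fun (i : I) (j : Fin n) => jacEntry n Φ ζ i j) = I.card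

theorem polydisc_eq_ball (n : ℕ) : polydisc n = ball 0 1 := by
  ext z
  simp [polydisc, pi_norm_lt_iff]

theorem closedPolydisc_eq_closedBall (n : ℕ) : closedPolydisc n = closedBall 0 1 := by
  ext z
  simp [closedPolydisc, pi_norm_le_iff_of_nonneg]

theorem closedPolydisc_eq_closure (n : ℕ) : closedPolydisc n = closure (polydisc n) := by
  rw [polydisc_eq_ball, closedPolydisc_eq_closedBall, closure_ball _ one_ne_zero]

theorem polydisc_subset (n : ℕ) : polydisc n ⊆ closedPolydisc n :=
  fun _ hz j => (hz j).le

theorem uniqueDiffOn_closedPolydisc (n : ℕ) : UniqueDiffOn ℝ (closedPolydisc n) := by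
  rw [closedPolydisc_eq_closedBall]
  apply uniqueDiffOn_convex (convex_closedBall _ _)
  exact ⟨0, ball_subset_interior_closedBall (by simp)⟩

theorem update_mem_closed {n : ℕ} {ξ : Fin n → ℂ} (hξ : ξ ∈ closedPolydisc n) (k : Fin n) {w : ℂ}
    (hw : ‖w‖ ≤ 1) : Function.update ξ k w ∈ closedPolydisc n := by
  intro j
  by_cases h : j = k
  · subst h; simpa using hw
  · simpa [h] using hξ j

section main
variable {n : ℕ} {Φ : (Fin n → ℂ) → (Fin n → ℂ)}

theorem maps_closed (hsm : ContDiffOn ℝ 1 Φ (closedPolydisc n))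
    (hmap : ∀ z ∈ polydisc n, Φ z ∈ polydisc n) :
    ∀ z ∈ closedPolydisc n, Φ z ∈ closedPolydisc n := by
  have h1 : MapsTo Φ (polydisc n) (polydisc n) := hmap
  have hc : ContinuousOn Φ (closure (polydisc n)) := by
    rw [← closedPolydisc_eq_closure]; exact hsm.continuousOn
  have := h1.closure_of_continuousOn hc
  rw [← closedPolydisc_eq_closure] at this
  exact this

theorem clinear (hhol : DifferentiableOn ℂ Φ (polydisc n))
    (hsm : ContDiffOn ℝ 1 Φ (closedPolydisc n)) (v : Fin n → ℂ) (c : ℂ) :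
    ∀ z ∈ closedPolydisc n, fderivWithin ℝ Φ (closedPolydisc n) z (c • v) =
      c • fderivWithin ℝ Φ (closedPolydisc n) z v := by
  have hD := hsm.continuousOn_fderivWithin (uniqueDiffOn_closedPolydisc n) le_rfl
  have h1 : EqOn (fun z => fderivWithin ℝ Φ (closedPolydisc n) z (c • v))
      (fun z => c • fderivWithin ℝ Φ (closedPolydisc n) z v) (polydisc n) := by
    intro z hz
    have ho : IsOpen (polydisc n) := by rw [polydisc_eq_ball]; exact isOpen_ball
    have hd : DifferentiableAt ℂ Φ z := (hhol z hz).differentiableAt (ho.mem_nhds hz)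
    have hn : closedPolydisc n ∈ nhds z :=
      Filter.mem_of_superset (ho.mem_nhds hz) (polydisc_subset n)
    simp only [fderivWithin_of_mem_nhds hn, hd.fderiv_restrictScalars ℝ]
    simp
  exact h1.of_subset_closure (hD.clm_apply continuousOn_const)
    ((hD.clm_apply continuousOn_const).const_smul c)
    (polydisc_subset n) (closedPolydisc_eq_closure n).le

theorem jac_smul (hhol : DifferentiableOn ℂ Φ (polydisc n))
    (hsm : ContDiffOn ℝ 1 Φ (closedPolydisc n)) {z : Fin n → ℂ} (hz : z ∈ closedPolydisc n)
    (i j : Fin n) (c : ℂ) :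
    fderivWithin ℝ Φ (closedPolydisc n) z (Pi.single j c) i = c * jacEntry n Φ z i j := by
  have := congrFun (clinear hhol hsm (Pi.single j 1) c z hz) i
  simpa [jacEntry, ← Pi.single_smul] using this

/-- composition with a curve in one coordinate -/
theorem hasFDerivWithinAt_closed (hsm : ContDiffOn ℝ 1 Φ (closedPolydisc n)) {z : Fin n → ℂ}
    (hz : z ∈ closedPolydisc n) :
    HasFDerivWithinAt Φ (fderivWithin ℝ Φ (closedPolydisc n) z) (closedPolydisc n) z :=
  (hsm.differentiableOn (by norm_num) z hz).hasFDerivWithinAt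

/-- vanishing of the first variation at a maximum -/
theorem first_variation (hhol : DifferentiableOn ℂ Φ (polydisc n))
    (hsm : ContDiffOn ℝ 1 Φ (closedPolydisc n))
    (hmap : ∀ z ∈ polydisc n, Φ z ∈ polydisc n) {z : Fin n → ℂ} (hz : z ∈ closedPolydisc n)
    {i : Fin n} (hi : ‖Φ z i‖ = 1) (j : Fin n) (γ : ℝ → ℂ) (v : ℂ) (h0 : γ 0 = z j)
    (hγ : HasDerivAt γ v 0) (hmem : ∀ᶠ t in nhds 0, ‖γ t‖ ≤ 1) :
    (starRingEnd ℂ (Φ z i) * (v * jacEntry n Φ z i j)).re = 0 := by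
  have hup : Function.update z j (γ 0) = z := by rw [h0]; simp
  have hu : HasDerivAt (fun t => Function.update z j (γ t)) (Pi.single j v) (0:ℝ) := by
    rw [hasDerivAt_pi]
    intro l
    by_cases h : l = j
    · subst h; simpa using hγ
    · simpa [h] using hasDerivAt_const (0:ℝ) (z l)
  have hF : HasDerivAt (fun t => Φ (Function.update z j (γ t)))
      (fderivWithin ℝ Φ (closedPolydisc n) z (Pi.single j v)) (0:ℝ) := by
    apply HasFDerivWithinAt.comp_hasDerivAt (t := closedPolydisc n) (0:ℝ) _ hu
    · filter_upwards [hmem] with t ht using update_mem_closed hz j ht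
    · simpa only [hup] using hasFDerivWithinAt_closed hsm hz
  have hFi : HasDerivAt (fun t => Φ (Function.update z j (γ t)) i)
      (v * jacEntry n Φ z i j) (0:ℝ) := by
    rw [← jac_smul hhol hsm hz]
    exact (hasDerivAt_pi.1 hF) i
  have hR : HasDerivAt (fun t => (starRingEnd ℂ (Φ z i) * Φ (Function.update z j (γ t)) i).re)
      (starRingEnd ℂ (Φ z i) * (v * jacEntry n Φ z i j)).re (0:ℝ) := 
    (Complex.reCLM.hasFDerivAt.comp_hasDerivAt (0:ℝ) (hFi.const_mul (starRingEnd ℂ (Φ z i))))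
  apply IsLocalMax.hasDerivAt_eq_zero _ hR
  filter_upwards [hmem] with t ht
  rw [hup]
  have h2 : (starRingEnd ℂ (Φ z i) * Φ z i).re = 1 := by
    rw [mul_comm, Complex.mul_conj, Complex.normSq_eq_norm_sq, hi]; simp
  rw [h2]
  refine (Complex.re_le_norm _).trans ?_
  rw [norm_mul, RCLike.norm_conj, hi, one_mul]
  exact maps_closed hsm hmap _ (update_mem_closed hz j ht) i

theorem jac_zero (hhol : DifferentiableOn ℂ Φ (polydisc n))
    (hsm : ContDiffOn ℝ 1 Φ (closedPolydisc n))
    (hmap : ∀ z ∈ polydisc n, Φ z ∈ polydisc n) {z : Fin n → ℂ} (hz : z ∈ closedPolydisc n)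
    {i : Fin n} (hi : ‖Φ z i‖ = 1) {j : Fin n} (hj : ‖z j‖ < 1) :
    jacEntry n Φ z i j = 0 := by
  have key : ∀ v : ℂ, (starRingEnd ℂ (Φ z i) * (v * jacEntry n Φ z i j)).re = 0 := by
    intro v
    have hd : HasDerivAt (fun t : ℝ => z j + t * v) v 0 := by
      simpa using ((Complex.ofRealCLM.hasDerivAt (x := (0:ℝ))).mul_const v).const_add (z j)
    apply first_variation hhol hsm hmap hz hi j (fun t => z j + t * v) v (by simp) hd
    have hc : Filter.Tendsto (fun t : ℝ => ‖z j + t * v‖) (nhds 0) (nhds ‖z j‖) := by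
      simpa using hd.continuousAt.norm.tendsto
    exact (hc.eventually_lt_const hj).mono fun t ht => ht.le
  have h1 := key 1
  have h2 := key Complex.I
  have h3 : starRingEnd ℂ (Φ z i) * jacEntry n Φ z i j = 0 := by
    apply Complex.ext
    · simpa using h1
    · have : starRingEnd ℂ (Φ z i) * (Complex.I * jacEntry n Φ z i j) =
        Complex.I * (starRingEnd ℂ (Φ z i) * jacEntry n Φ z i j) := by ring
      rw [this, Complex.I_mul_re] at h2
      exact neg_eq_zero.1 h2
  rcases mul_eq_zero.1 h3 with h | h
  · have : ‖starRingEnd ℂ (Φ z i)‖ = 1 := by rw [RCLike.norm_conj, hi]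
    rw [h] at this; simp at this
  · exact h

theorem jac_real (hhol : DifferentiableOn ℂ Φ (polydisc n))
    (hsm : ContDiffOn ℝ 1 Φ (closedPolydisc n))
    (hmap : ∀ z ∈ polydisc n, Φ z ∈ polydisc n) {z : Fin n → ℂ} (hz : z ∈ closedPolydisc n)
    {i : Fin n} (hi : ‖Φ z i‖ = 1) (j : Fin n) :
    (starRingEnd ℂ (Φ z i) * (z j * jacEntry n Φ z i j)).im = 0 := by
  have hd : HasDerivAt (fun t : ℝ => Complex.exp (t * Complex.I) * z j) (Complex.I * z j) 0 := by
    have h1 : HasDerivAt (fun t : ℝ => (t:ℂ) * Complex.I) Complex.I 0 := by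
      simpa using ((Complex.ofRealCLM.hasDerivAt (x := (0:ℝ))).mul_const Complex.I)
    simpa using h1.cexp.mul_const (z j)
  have := first_variation hhol hsm hmap hz hi j _ _ (by simp) hd
    (Filter.Eventually.of_forall fun t => by
      rw [norm_mul, Complex.norm_exp_ofReal_mul_I, one_mul]; exact hz j)
  have h2 : starRingEnd ℂ (Φ z i) * (Complex.I * z j * jacEntry n Φ z i j) =
        Complex.I * (starRingEnd ℂ (Φ z i) * (z j * jacEntry n Φ z i j)) := by ring
  rw [h2, Complex.I_mul_re] at this
  exact neg_eq_zero.1 this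

/-- holomorphy in one variable along closed slices -/
theorem slice_diff (hhol : DifferentiableOn ℂ Φ (polydisc n))
    (hsm : ContDiffOn ℝ 1 Φ (closedPolydisc n)) {ξ : Fin n → ℂ} (hξ : ξ ∈ closedPolydisc n)
    (i k : Fin n) :
    DiffContOnCl ℂ (fun w => Φ (Function.update ξ k w) i) (ball 0 1) := by
  constructor
  · intro w hw
    apply DifferentiableAt.differentiableWithinAt
    have hw' : ‖w‖ < 1 := by simpa using hw
    have hu : HasFDerivAt (fun w : ℂ => Function.update ξ k w)
        (ContinuousLinearMap.single ℝ (fun _ : Fin n => ℂ) k) w := by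
      rw [hasFDerivAt_pi']
      intro l
      by_cases h : l = k
      · subst h
        simp only [Function.update_self]
        refine (hasFDerivAt_id (𝕜 := ℝ) w).congr_fderiv ?_
        refine ContinuousLinearMap.ext fun v => ?_
        simp
      · simp only [Function.update_of_ne h]
        refine (hasFDerivAt_const (𝕜 := ℝ) (ξ l) w).congr_fderiv ?_
        refine ContinuousLinearMap.ext fun v => ?_
        simp [h]
    have hmem : Function.update ξ k w ∈ closedPolydisc n := update_mem_closed hξ k hw'.le
    have hF : HasFDerivAt (fun w : ℂ => Φ (Function.update ξ k w))
        ((fderivWithin ℝ Φ (closedPolydisc n) (Function.update ξ k w)).comp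
          (ContinuousLinearMap.single ℝ (fun _ : Fin n => ℂ) k)) w := by
      have h3 : HasFDerivWithinAt (fun w : ℂ => Φ (Function.update ξ k w)) _ (ball 0 1) w :=
        (hasFDerivWithinAt_closed hsm hmem).comp w hu.hasFDerivWithinAt
          (fun y hy => update_mem_closed hξ k (by simpa using (le_of_lt (mem_ball_zero_iff.1 hy))))
      exact h3.hasFDerivAt (isOpen_ball.mem_nhds hw)
    have hFi := hasFDerivAt_pi'.1 hF i
    rw [differentiableAt_complex_iff_differentiableAt_real]
    refine ⟨hFi.differentiableAt, ?_⟩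
    rw [hFi.fderiv]
    simp [jac_smul hhol hsm hmem]
  · rw [closure_ball _ one_ne_zero]
    have h1 : ContinuousOn Φ (closedPolydisc n) := hsm.continuousOn
    have h2 : ContinuousOn (fun w : ℂ => Φ (Function.update ξ k w)) (closedBall 0 1) :=
      h1.comp (by fun_prop) (fun y hy => update_mem_closed hξ k (by simpa using hy))
    exact continuousOn_pi.1 h2 i

theorem slice_const (hhol : DifferentiableOn ℂ Φ (polydisc n))
    (hsm : ContDiffOn ℝ 1 Φ (closedPolydisc n))
    (hmap : ∀ z ∈ polydisc n, Φ z ∈ polydisc n) {ξ : Fin n → ℂ} (hξ : ξ ∈ closedPolydisc n)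
    {i k : Fin n} (hi : ‖Φ ξ i‖ = 1) (hk : ‖ξ k‖ < 1) {w : ℂ} (hw : ‖w‖ ≤ 1) :
    Φ (Function.update ξ k w) i = Φ ξ i := by
  have h := Complex.eqOn_closure_of_isPreconnected_of_isMaxOn_norm (c := ξ k)
    (convex_ball (0:ℂ) 1).isPreconnected isOpen_ball (slice_diff hhol hsm hξ i k)
    (by simpa using hk) (by
      intro y hy
      simp only [Function.comp, Function.update_eq_self, mem_ofPred_eq, hi]
      exact maps_closed hsm hmap _ (update_mem_closed hξ k (by simpa using (le_of_lt (mem_ball_zero_iff.1 hy)))) i)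
  rw [closure_ball _ one_ne_zero] at h
  simpa using h (by simpa using hw : w ∈ closedBall (0:ℂ) 1)

theorem const_of_real {g : ℂ → ℂ} (hg : DifferentiableOn ℂ g (ball 0 1))
    (hr : ∀ w ∈ ball (0:ℂ) 1, (g w).im = 0) : ∀ w ∈ ball (0:ℂ) 1, ∀ y ∈ ball (0:ℂ) 1, g w = g y := by
  have hz : ∀ x ∈ ball (0:ℂ) 1, fderivWithin ℂ g (ball 0 1) x = 0 := by
    intro x hx
    have hx' := isOpen_ball.mem_nhds hx
    rw [fderivWithin_of_mem_nhds hx']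
    have hd : HasFDerivAt g (fderiv ℂ g x) x := (hg.differentiableAt hx').hasFDerivAt
    have h1 := (Complex.imCLM.hasFDerivAt (x := g x)).comp x (hd.restrictScalars ℝ)
    have h2 : HasFDerivAt (Complex.imCLM ∘ g) (0 : ℂ →L[ℝ] ℝ) x := by
      apply (hasFDerivAt_const (0:ℝ) x).congr_of_eventuallyEq
      filter_upwards [hx'] with y hy using hr y hy
    have h3 := h1.unique h2
    have h4 : (fderiv ℂ g x 1).im = 0 := by simpa using congrArg (fun L => L 1) h3
    have h5 : (fderiv ℂ g x Complex.I).im = 0 := by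
      simpa using congrArg (fun L => L Complex.I) h3
    have h6 : fderiv ℂ g x Complex.I = Complex.I * fderiv ℂ g x 1 := by
      rw [← smul_eq_mul, ← map_smul]; simp
    rw [h6, Complex.I_mul_im] at h5
    ext
    exact Complex.ext h5 h4
  intro w hw y hy
  exact (convex_ball (0:ℂ) 1).is_const_of_fderivWithin_eq_zero hg hz hw hy

theorem jac_cont (hsm : ContDiffOn ℝ 1 Φ (closedPolydisc n)) {ξ : Fin n → ℂ}
    (hξ : ξ ∈ closedPolydisc n) (i j k : Fin n) :
    ContinuousOn (fun w => jacEntry n Φ (Function.update ξ k w) i j) (closedBall 0 1) := by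
  have hD := hsm.continuousOn_fderivWithin (uniqueDiffOn_closedPolydisc n) le_rfl
  have h1 : ContinuousOn (fun z => jacEntry n Φ z i j) (closedPolydisc n) :=
    continuousOn_pi.1 (hD.clm_apply continuousOn_const) i
  exact h1.comp (by fun_prop) (fun y hy => update_mem_closed hξ k (by simpa using hy))

theorem jac_diff (hhol : DifferentiableOn ℂ Φ (polydisc n))
    (hsm : ContDiffOn ℝ 1 Φ (closedPolydisc n)) {ξ : Fin n → ℂ} (hξ : ξ ∈ closedPolydisc n)
    (i : Fin n) {j k : Fin n} (hjk : j ≠ k) :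
    DifferentiableOn ℂ (fun w => ξ j * jacEntry n Φ (Function.update ξ k w) i j) (ball 0 1) := by
  have hD := hsm.continuousOn_fderivWithin (uniqueDiffOn_closedPolydisc n) le_rfl
  have hcomp : IsCompact (closedPolydisc n) := by
    rw [closedPolydisc_eq_closedBall]; exact isCompact_closedBall _ _
  have hU := hcomp.uniformContinuousOn_of_continuous hD
  rw [Metric.uniformContinuousOn_iff_le] at hU
  have hconv : Convex ℝ (closedPolydisc n) := by
    rw [closedPolydisc_eq_closedBall]; exact convex_closedBall _ _
  -- difference quotients
  let G : ℝ → ℂ → ℂ := fun t w => (t : ℂ)⁻¹ *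
    (Φ (Function.update ξ k w) i - Φ (Function.update (Function.update ξ j ((1 - t : ℝ) * ξ j)) k w) i)
  have hmem : ∀ t : ℝ, 0 < t → t < 1 → Function.update ξ j ((1 - t : ℝ) * ξ j) ∈ closedPolydisc n := by
    intro t h0 h1
    apply update_mem_closed hξ
    rw [norm_mul, Complex.norm_real, Real.norm_of_nonneg (by linarith)]
    exact mul_le_one₀ (by linarith) (norm_nonneg _) (hξ j)
  have hlim : TendstoLocallyUniformlyOn G
      (fun w => ξ j * jacEntry n Φ (Function.update ξ k w) i j) (nhdsWithin 0 (Ioi 0)) (ball 0 1) := by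
    apply TendstoUniformlyOn.tendstoLocallyUniformlyOn
    rw [Metric.tendstoUniformlyOn_iff]
    intro ε hε
    obtain ⟨δ, hδ, hδ'⟩ := hU (ε / 2) (by positivity)
    have hev : ∀ᶠ t : ℝ in nhdsWithin 0 (Ioi 0), t ∈ Ioo 0 (min 1 δ) :=
      Ioo_mem_nhdsGT (by positivity)
    filter_upwards [hev] with t ht w hw
    have ht0 : 0 < t := ht.1
    have ht1 : t < 1 := ht.2.trans_le (min_le_left _ _)
    have htδ : t < δ := ht.2.trans_le (min_le_right _ _)
    have hw' : ‖w‖ ≤ 1 := (mem_ball_zero_iff.1 hw).le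
    set z := Function.update ξ k w with hz
    set z' := Function.update (Function.update ξ j ((1 - t : ℝ) * ξ j)) k w with hz'
    have hzm : z ∈ closedPolydisc n := update_mem_closed hξ k hw'
    have hzm' : z' ∈ closedPolydisc n := update_mem_closed (hmem t ht0 ht1) k hw'
    have hdiff : z - z' = Pi.single j (t * ξ j) := by
      ext l
      by_cases h : l = j
      · subst h
        simp [hz, hz', hjk]; ring
      · by_cases h' : l = k
        · subst h'; simp [hz, hz', h]
        · simp [hz, hz', h, h']
    have hnorm : ‖z - z'‖ ≤ t := by
      rw [hdiff, Pi.norm_single, norm_mul, Complex.norm_real, Real.norm_of_nonneg ht0.le]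
      exact mul_le_of_le_one_right ht0.le (hξ j)
    have hmv := Convex.norm_image_sub_le_of_norm_hasFDerivWithin_le' (f := Φ)
      (f' := fderivWithin ℝ Φ (closedPolydisc n))
      (φ := fderivWithin ℝ Φ (closedPolydisc n) z) (C := ε / 2)
      (s := closedPolydisc n ∩ closedBall z δ) (x := z') (y := z)
      (fun x hx => (hasFDerivWithinAt_closed hsm hx.1).mono inter_subset_left)
      (fun x hx => by
        rw [← dist_eq_norm]
        exact hδ' x hx.1 z hzm hx.2)
      (hconv.inter (convex_closedBall _ _))
      ⟨hzm', by rw [mem_closedBall, dist_comm, dist_eq_norm]; linarith⟩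
      ⟨hzm, by simp [hδ.le]⟩
    have hi := (norm_le_pi_norm _ i).trans hmv
    rw [hdiff, Pi.sub_apply, jac_smul hhol hsm hzm, Pi.sub_apply, ← hdiff] at hi
    have htc : (t : ℂ) ≠ 0 := by exact_mod_cast ht0.ne'
    have heq : G t w - ξ j * jacEntry n Φ z i j =
      (t:ℂ)⁻¹ * (Φ z i - Φ z' i - t * ξ j * jacEntry n Φ z i j) := by
      simp only [G, ← hz, ← hz']
      field_simp
    rw [dist_comm, dist_eq_norm, heq, norm_mul, norm_inv, Complex.norm_real,
      Real.norm_of_nonneg ht0.le]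
    calc t⁻¹ * _ ≤ t⁻¹ * (ε / 2 * t) := by gcongr; exact hi.trans (by gcongr)
      _ = ε / 2 := by field_simp
      _ < ε := by linarith
  apply hlim.differentiableOn _ isOpen_ball
  have hev : ∀ᶠ t : ℝ in nhdsWithin 0 (Ioi 0), t ∈ Ioo (0:ℝ) 1 := Ioo_mem_nhdsGT (by positivity)
  filter_upwards [hev] with t ht
  exact ((slice_diff hhol hsm hξ i k).differentiableOn.sub
    (slice_diff hhol hsm (hmem t ht.1 ht.2) i k).differentiableOn).const_mul _

theorem jac_const (hhol : DifferentiableOn ℂ Φ (polydisc n))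
    (hsm : ContDiffOn ℝ 1 Φ (closedPolydisc n))
    (hmap : ∀ z ∈ polydisc n, Φ z ∈ polydisc n) {ξ : Fin n → ℂ} (hξ : ξ ∈ closedPolydisc n)
    {i k : Fin n} (hi : ‖Φ ξ i‖ = 1) (hk : ‖ξ k‖ < 1) (j : Fin n) {w : ℂ} (hw : ‖w‖ ≤ 1) :
    jacEntry n Φ (Function.update ξ k w) i j = jacEntry n Φ ξ i j := by
  have hval : ∀ y ∈ ball (0:ℂ) 1, Φ (Function.update ξ k y) i = Φ ξ i := fun y hy =>
    slice_const hhol hsm hmap hξ hi hk (mem_ball_zero_iff.1 hy).le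
  have hmem : ∀ y ∈ ball (0:ℂ) 1, Function.update ξ k y ∈ closedPolydisc n := fun y hy =>
    update_mem_closed hξ k (mem_ball_zero_iff.1 hy).le
  have hopen : EqOn (fun y => jacEntry n Φ (Function.update ξ k y) i j)
      (fun _ => jacEntry n Φ ξ i j) (ball 0 1) := by
    intro y hy
    have hy' : ‖y‖ < 1 := mem_ball_zero_iff.1 hy
    have hyi : ‖Φ (Function.update ξ k y) i‖ = 1 := by rw [hval y hy, hi]
    show jacEntry n Φ (Function.update ξ k y) i j = jacEntry n Φ ξ i j
    by_cases hj : ‖ξ j‖ < 1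
    · rw [jac_zero hhol hsm hmap hξ hi hj]
      apply jac_zero hhol hsm hmap (hmem y hy) hyi
      by_cases h : j = k
      · subst h; simpa using hy'
      · simpa [h] using hj
    · have hjk : j ≠ k := by rintro rfl; exact hj hk
      have hr : ∀ y ∈ ball (0:ℂ) 1, (starRingEnd ℂ (Φ ξ i) *
          (ξ j * jacEntry n Φ (Function.update ξ k y) i j)).im = 0 := by
        intro y hy
        have := jac_real hhol hsm hmap (hmem y hy) (by rw [hval y hy, hi]) j (i := i)
        simpa only [hval y hy, Function.update_of_ne hjk] using this
      have := const_of_real ((jac_diff hhol hsm hξ i hjk).const_mul (starRingEnd ℂ (Φ ξ i))) hr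
        y hy (ξ k) (by simpa using hk)
      have hc : starRingEnd ℂ (Φ ξ i) ≠ 0 := by
        rw [← norm_ne_zero_iff, RCLike.norm_conj, hi]; exact one_ne_zero
      have hξj : ξ j ≠ 0 := by
        intro h; rw [h] at hj; simp at hj
      simpa [hc, hξj] using this
  have := hopen.of_subset_closure (jac_cont hsm hξ i j k) continuousOn_const
    ball_subset_closedBall (by rw [closure_ball _ one_ne_zero])
  exact this (by simpa using hw : w ∈ closedBall (0:ℂ) 1)

end main

theorem rank_condition_on_topological_boundary (n : ℕ)
    (Φ : (Fin n → ℂ) → (Fin n → ℂ))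
    (hhol : DifferentiableOn ℂ Φ (polydisc n))
    (hsm : ContDiffOn ℝ 1 Φ (closedPolydisc n))
    (hmap : ∀ z ∈ polydisc n, Φ z ∈ polydisc n)
    (hrank : rankCond n Φ) :
    ∀ I : Finset (Fin n), I.Nonempty → ∀ ξ ∈ closedPolydisc n,
      (∀ i ∈ I, ‖Φ ξ i‖ = 1) →
        Matrix.rank (Matrix.of fun (i : I) (j : Fin n) => jacEntry n Φ ξ i j) = I.card := by
  intro I hI
  suffices H : ∀ S : Finset (Fin n), ∀ ξ ∈ closedPolydisc n, (∀ k, k ∉ S → ‖ξ k‖ = 1) →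
      (∀ i ∈ I, ‖Φ ξ i‖ = 1) →
        Matrix.rank (Matrix.of fun (i : I) (j : Fin n) => jacEntry n Φ ξ i j) = I.card from
    fun ξ hξ h => H Finset.univ ξ hξ (by simp) h
  intro S
  induction S using Finset.induction_on with
  | empty =>
    intro ξ _ h1 h2
    exact hrank I hI ξ (fun k => h1 k (by simp)) h2
  | insert k S _ ih =>
    intro ξ hξ h1 h2
    by_cases hk : ‖ξ k‖ < 1
    · have := ih (Function.update ξ k 1) (update_mem_closed hξ k (by simp))
        (by
          intro l hl
          by_cases h : l = k
          · subst h; simp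
          · simpa [h] using h1 l (by simp [h, hl]))
        (by
          intro i hi
          rw [slice_const hhol hsm hmap hξ (h2 i hi) hk (by simp), h2 i hi])
      rw [← this]
      congr 2
      funext i j
      exact (jac_const hhol hsm hmap hξ (h2 i i.2) hk j (by simp)).symm
    · apply ih ξ hξ _ h2
      intro l hl
      by_cases h : l = k
      · subst h; exact le_antisymm (hξ l) (not_lt.1 hk)
      · exact h1 l (by simp [h, hl])

end
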